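/- arXiv:2308.09842 — 2 statements merged into one kernel-verified Lean document; each statement's English description precedes it below -/
import Mathlib

section
/- Let ε > 0 be a real number, k ≥ 3 an integer, d ≥ 1, and γ a real number with γ > k·ε. Let r₁, …, r_m be pairwise disjoint γ-bounded rectilinear hyperrectangles in ℝ^d (each r_j = ∏_{i=1}^d [a_{j,i}, b_{j,i}] with b_{j,i} − a_{j,i} ≥ γ for all i). Then there exist rectilinear hyperrectangles r₁^(ε), …, r_m^(ε) such that each r_j^(ε) is ε-aligned, r_j^(ε) ⊆ r_j for every j (so the r_j^(ε) are pairwise disjoint), and the Lebesgue volume of ⋃_j r_j^(ε) is at least ((k−2)/k)^d times the Lebesgue volume of ⋃_j r_j. -/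
open MeasureTheory

/-!
Round every lower endpoint up and every upper endpoint down to a multiple of `ε`. An edge of length
`L ≥ k * ε` loses at most `2 * ε ≤ (2 / k) * L`, so it keeps at least the fraction `(k - 2) / k` of
its length, and a `d`-dimensional box at least the `d`-th power of that fraction of its volume.
The shrunken boxes inherit disjointness, so their volumes add up, while subadditivity suffices for
the original union.
-/

section Rounding

variable {K : Type*} [Field K] [LinearOrder K] [FloorRing K] {ε x y : K}

/-- The least integer multiple of `ε` that is at least `x`, for `0 < ε`. It serves as the lower
endpoint of an `ε`-aligned interval contained in one that starts at `x`. -/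
def ceilMultiple (ε x : K) : K := ⌈x / ε⌉ * ε

/-- The greatest integer multiple of `ε` that is at most `x`, for `0 < ε`. It serves as the upper
endpoint of an `ε`-aligned interval contained in one that ends at `x`. -/
def floorMultiple (ε x : K) : K := ⌊x / ε⌋ * ε

variable [IsStrictOrderedRing K]

theorem le_ceilMultiple (hε : 0 < ε) (x : K) : x ≤ ceilMultiple ε x :=
  (div_le_iff₀ hε).1 (Int.le_ceil _)

theorem floorMultiple_le (hε : 0 < ε) (x : K) : floorMultiple ε x ≤ x :=
  (le_div_iff₀ hε).1 (Int.floor_le _)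

theorem ceilMultiple_lt_add (hε : 0 < ε) (x : K) : ceilMultiple ε x < x + ε :=
  calc ceilMultiple ε x < (x / ε + 1) * ε := mul_lt_mul_of_pos_right (Int.ceil_lt_add_one _) hε
    _ = x + ε := by rw [add_one_mul, div_mul_cancel₀ x hε.ne']

theorem lt_floorMultiple_add (hε : 0 < ε) (x : K) : x < floorMultiple ε x + ε :=
  calc x = x / ε * ε := (div_mul_cancel₀ x hε.ne').symm
    _ < (⌊x / ε⌋ + 1) * ε := mul_lt_mul_of_pos_right (Int.lt_floor_add_one _) hε
    _ = floorMultiple ε x + ε := add_one_mul _ _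

theorem div_mul_sub_le_floorMultiple_sub_ceilMultiple {k : K} (hε : 0 < ε) (hk : 0 < k)
    (hxy : k * ε ≤ y - x) :
    (k - 2) / k * (y - x) ≤ floorMultiple ε y - ceilMultiple ε x := by
  have hε_le : ε ≤ (y - x) / k := (le_div_iff₀' hk).2 hxy
  calc (k - 2) / k * (y - x) = (y - x) - 2 * ((y - x) / k) := by field_simp
    _ ≤ (y - ε) - (x + ε) := by linarith
    _ ≤ floorMultiple ε y - ceilMultiple ε x :=
      sub_le_sub (sub_le_iff_le_add.2 (lt_floorMultiple_add hε y).le) (ceilMultiple_lt_add hε x).le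

end Rounding

theorem ofReal_pow_mul_volume_Icc_le {κ : Type*} [Fintype κ] {a b ℓ u : κ → ℝ} {c : ℝ}
    (hc : 0 ≤ c) (h : ∀ i, c * (b i - a i) ≤ u i - ℓ i) :
    ENNReal.ofReal (c ^ Fintype.card κ) * volume (Set.Icc a b) ≤ volume (Set.Icc ℓ u) := by
  rw [Real.volume_Icc_pi, Real.volume_Icc_pi, ENNReal.ofReal_pow hc, ← Finset.card_univ,
    ← Finset.prod_const, ← Finset.prod_mul_distrib]
  refine Finset.prod_le_prod' fun i _ => ?_
  rw [← ENNReal.ofReal_mul hc]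
  exact ENNReal.ofReal_le_ofReal (h i)

theorem mul_measure_iUnion_le_measure_iUnion {α ι : Type*} [MeasurableSpace α] [Countable ι]
    {μ : Measure α} {s t : ι → Set α} {c : ENNReal}
    (hdisj : Pairwise (Function.onFun (AEDisjoint μ) t)) (ht : ∀ j, NullMeasurableSet (t j) μ)
    (h : ∀ j, c * μ (s j) ≤ μ (t j)) :
    c * μ (⋃ j, s j) ≤ μ (⋃ j, t j) :=
  calc c * μ (⋃ j, s j) ≤ c * ∑' j, μ (s j) := by gcongr; exact measure_iUnion_le s
    _ = ∑' j, c * μ (s j) := ENNReal.tsum_mul_left.symm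
    _ ≤ ∑' j, μ (t j) := ENNReal.tsum_le_tsum h
    _ = μ (⋃ j, t j) := (measure_iUnion₀ hdisj ht).symm

theorem epsilon_aligned_family_general {ι κ : Type*} [Countable ι] [Fintype κ] {ε k : ℝ}
    (hε : 0 < ε) (hk : 2 ≤ k) {a b : ι → κ → ℝ} (hbound : ∀ j i, k * ε ≤ b j i - a j i)
    (hdisj : Pairwise (Function.onFun (AEDisjoint volume) fun j => Set.Icc (a j) (b j))) :
    ∃ ℓ u : ι → κ → ℝ,
      (∀ j i, ℓ j i ≤ u j i) ∧
      (∀ j i, ∃ c : ℤ, ℓ j i = c * ε) ∧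
      (∀ j i, ∃ c : ℤ, u j i = c * ε) ∧
      (∀ j, Set.Icc (ℓ j) (u j) ⊆ Set.Icc (a j) (b j)) ∧
      ENNReal.ofReal (((k - 2) / k) ^ Fintype.card κ) * volume (⋃ j, Set.Icc (a j) (b j)) ≤
        volume (⋃ j, Set.Icc (ℓ j) (u j)) := by
  have hk_pos : 0 < k := two_pos.trans_le hk
  have hratio : 0 ≤ (k - 2) / k := div_nonneg (sub_nonneg.2 hk) hk_pos.le
  let ℓ : ι → κ → ℝ := fun j i => ceilMultiple ε (a j i)
  let u : ι → κ → ℝ := fun j i => floorMultiple ε (b j i)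
  have hedge (j i) : (k - 2) / k * (b j i - a j i) ≤ u j i - ℓ j i :=
    div_mul_sub_le_floorMultiple_sub_ceilMultiple hε hk_pos (hbound j i)
  have hle (j i) : ℓ j i ≤ u j i :=
    have hab : 0 ≤ b j i - a j i := (mul_pos hk_pos hε).le.trans (hbound j i)
    sub_nonneg.1 ((mul_nonneg hratio hab).trans (hedge j i))
  have hsub (j) : Set.Icc (ℓ j) (u j) ⊆ Set.Icc (a j) (b j) :=
    Set.Icc_subset_Icc (fun i => le_ceilMultiple hε (a j i)) (fun i => floorMultiple_le hε (b j i))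
  refine ⟨ℓ, u, hle, fun j i => ⟨_, rfl⟩, fun j i => ⟨_, rfl⟩, hsub, ?_⟩
  exact mul_measure_iUnion_le_measure_iUnion
    (fun p q hpq => (hdisj hpq).mono (hsub p) (hsub q))
    (fun j => measurableSet_Icc.nullMeasurableSet)
    (fun j => ofReal_pow_mul_volume_Icc_le hratio (hedge j))

/-- Proposition 2: a pairwise disjoint family of γ-bounded rectilinear hyperrectangles
(γ > k·ε) admits ε-aligned rectilinear sub-hyperrectangles whose union covers at least a
((k-2)/k)^d fraction of the volume of the original union. -/
theorem epsilon_aligned_family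
    (ε : ℝ) (hε : 0 < ε) (k : ℕ) (hk : 3 ≤ k) (d : ℕ) (hd : 1 ≤ d)
    (γ : ℝ) (hγ : γ > (k : ℝ) * ε) (m : ℕ)
    (a b : Fin m → Fin d → ℝ)
    (hab : ∀ j i, a j i ≤ b j i) (hbound : ∀ j i, γ ≤ b j i - a j i)
    (hdisj : Pairwise (Function.onFun Disjoint
      fun j => Set.univ.pi fun i => Set.Icc (a j i) (b j i))) :
    ∃ ℓ u : Fin m → Fin d → ℝ,
      (∀ j i, ℓ j i ≤ u j i) ∧
      (∀ j i, ∃ c : ℤ, ℓ j i = (c : ℝ) * ε) ∧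
      (∀ j i, ∃ c : ℤ, u j i = (c : ℝ) * ε) ∧
      (∀ j, (Set.univ.pi fun i => Set.Icc (ℓ j i) (u j i)) ⊆
        Set.univ.pi fun i => Set.Icc (a j i) (b j i)) ∧
      ENNReal.ofReal ((((k : ℝ) - 2) / k) ^ d) *
          volume (⋃ j, Set.univ.pi fun i => Set.Icc (a j i) (b j i)) ≤
        volume (⋃ j, Set.univ.pi fun i => Set.Icc (ℓ j i) (u j i)) := by
  have hk_two : (2 : ℝ) ≤ k := by exact_mod_cast Nat.le_of_succ_le hk
  simp only [Set.pi_univ_Icc] at hdisj ⊢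
  simpa only [Fintype.card_fin] using epsilon_aligned_family_general hε hk_two
    (fun j i => hγ.le.trans (hbound j i)) (hdisj.mono fun _ _ h => h.aedisjoint)
end

section
/- Let ε > 0 be a real number, k ≥ 3 an integer, d ≥ 1, and γ a real number with γ > k·ε. Let r₁, …, r_m be pairwise disjoint γ-bounded rectilinear hyperrectangles in ℝ^d, and let S = ⋃_j r_j. Then there exists a finite family of pairwise disjoint half-open cubes of the form ∏_{i=1}^d [ε·cᵢ, ε·(cᵢ+1)) with all cᵢ integers, each contained in S, whose total Lebesgue volume is at least ((k−2)/k)^d times the Lebesgue volume of S. -/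
open MeasureTheory

/-!
Rounding the faces of a box inwards to the grid `ε ℤ` costs at most `2 * ε` per side, so a side of
length at least `k * ε` keeps at least the fraction `(k - 2) / k` of its length, and a box in
dimension `d` the fraction `((k - 2) / k) ^ d` of its volume. The rounded box is tiled by grid cubes
contained in the original one, and adding up over almost disjoint boxes preserves the fraction.
-/

section Measure

variable {α κ : Type*} [MeasurableSpace α] {μ : Measure α}

theorem mul_measure_iUnion_le_of_subset [Countable κ] {r : ENNReal} {s t : κ → Set α}
    (hts : ∀ j, t j ⊆ s j) (ht : ∀ j, NullMeasurableSet (t j) μ)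
    (hs : Pairwise (Function.onFun (AEDisjoint μ) s)) (h : ∀ j, r * μ (s j) ≤ μ (t j)) :
    r * μ (⋃ j, s j) ≤ μ (⋃ j, t j) := by
  have ht_disj : Pairwise (Function.onFun (AEDisjoint μ) t) :=
    fun i j hij => (hs hij).mono (hts i) (hts j)
  calc r * μ (⋃ j, s j) ≤ r * ∑' j, μ (s j) := by gcongr; exact measure_iUnion_le s
    _ = ∑' j, r * μ (s j) := ENNReal.tsum_mul_left.symm
    _ ≤ ∑' j, μ (t j) := ENNReal.tsum_le_tsum h
    _ = μ (⋃ j, t j) := (measure_iUnion₀ ht_disj ht).symm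

end Measure

section Rounding

variable {ε : ℝ}

theorem le_mul_ceil_div (hε : 0 < ε) (x : ℝ) : x ≤ ε * ⌈x / ε⌉ :=
  (div_le_iff₀' hε).1 (Int.le_ceil _)

theorem mul_floor_div_le (hε : 0 < ε) (x : ℝ) : ε * ⌊x / ε⌋ ≤ x :=
  (le_div_iff₀' hε).1 (Int.floor_le _)

theorem mul_sub_le_mul_floor_sub_mul_ceil {k a b : ℝ} (hε : 0 < ε) (hk : 0 < k)
    (hab : k * ε ≤ b - a) :
    (k - 2) / k * (b - a) ≤ ε * ⌊b / ε⌋ - ε * ⌈a / ε⌉ := by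
  have ceil_le : ε * ⌈a / ε⌉ ≤ a + ε :=
    calc ε * ⌈a / ε⌉ ≤ ε * (a / ε + 1) := by gcongr; exact (Int.ceil_lt_add_one _).le
      _ = a + ε := by field_simp
  have le_floor : b - ε ≤ ε * ⌊b / ε⌋ :=
    calc b - ε = ε * (b / ε - 1) := by field_simp
      _ ≤ ε * ⌊b / ε⌋ := by gcongr; exact (Int.sub_one_lt_floor _).le
  calc (k - 2) / k * (b - a) = (b - a) - 2 * ((b - a) / k) := by field_simp
    _ ≤ (b - a) - 2 * ε := by gcongr; exact (le_div_iff₀' hk).2 hab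
    _ ≤ ε * ⌊b / ε⌋ - ε * ⌈a / ε⌉ := by linarith

end Rounding

section Grid

variable {ι κ : Type*} {ε : ℝ}

/-- The cube of the grid `ε ℤ ^ ι` with lower corner `ε • c`, half-open so that distinct cubes are
disjoint and all cubes together cover the space. -/
def gridCube (ε : ℝ) (c : ι → ℤ) : Set (ι → ℝ) :=
  Set.univ.pi fun i => Set.Ico (ε * c i) (ε * ((c i : ℝ) + 1))

/-- The inner approximation of `S` by the grid of mesh `ε`: the union of all grid cubes contained
in `S`. -/
def gridInterior (ε : ℝ) (S : Set (ι → ℝ)) : Set (ι → ℝ) :=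
  ⋃ c ∈ {c | gridCube ε c ⊆ S}, gridCube ε c

theorem mem_gridCube_iff (hε : 0 < ε) {c : ι → ℤ} {x : ι → ℝ} :
    x ∈ gridCube ε c ↔ (fun i => ⌊x i / ε⌋) = c := by
  simp only [gridCube, Set.mem_univ_pi, Set.mem_Ico, funext_iff, Int.floor_eq_iff,
    le_div_iff₀' hε, div_lt_iff₀' hε]

theorem pairwise_disjoint_gridCube (hε : 0 < ε) :
    Pairwise (Function.onFun Disjoint (gridCube ε : (ι → ℤ) → Set (ι → ℝ))) :=
  fun _ _ hne => Set.disjoint_left.2 fun _ hx hx' =>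
    hne (((mem_gridCube_iff hε).1 hx).symm.trans ((mem_gridCube_iff hε).1 hx'))

theorem gridCube_nonempty (hε : 0 < ε) (c : ι → ℤ) : (gridCube ε c).Nonempty :=
  Set.univ_pi_nonempty_iff.2 fun i => Set.nonempty_Ico.2 (by gcongr; exact lt_add_one _)

theorem gridInterior_subset (ε : ℝ) (S : Set (ι → ℝ)) : gridInterior ε S ⊆ S :=
  Set.iUnion₂_subset fun _ hc => hc

theorem gridInterior_mono (ε : ℝ) : Monotone (gridInterior ε : Set (ι → ℝ) → Set (ι → ℝ)) :=
  fun _ _ hST => Set.biUnion_subset_biUnion_left fun _ hc => hc.trans hST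

theorem measurableSet_gridInterior [Finite ι] (ε : ℝ) (S : Set (ι → ℝ)) :
    MeasurableSet (gridInterior ε S) :=
  MeasurableSet.biUnion (Set.to_countable _) fun _ _ =>
    MeasurableSet.univ_pi fun _ => measurableSet_Ico

theorem finite_setOf_gridCube_subset [Finite ι] (hε : 0 < ε) {S : Set (ι → ℝ)}
    (hS : Bornology.IsBounded S) : {c | gridCube ε c ⊆ S}.Finite := by
  classical
  cases nonempty_fintype ι
  let index : (ι → ℝ) → ι → ℤ := fun x i => ⌊x i / ε⌋
  have index_mono : Monotone index := fun _ _ hxy i =>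
    Int.floor_mono (div_le_div_of_nonneg_right (hxy i) hε.le)
  have index_image_finite : (index '' S).Finite :=
    Set.finite_iff_bddBelow_bddAbove.2
      ⟨index_mono.map_bddBelow hS.bddBelow, index_mono.map_bddAbove hS.bddAbove⟩
  refine index_image_finite.subset fun c hc => ?_
  obtain ⟨x, hx⟩ := gridCube_nonempty hε c
  exact ⟨x, hc hx, (mem_gridCube_iff hε).1 hx⟩

theorem pi_Ico_subset_gridInterior_Icc (hε : 0 < ε) (a b : ι → ℝ) :
    (Set.univ.pi fun i => Set.Ico (ε * ⌈a i / ε⌉) (ε * ⌊b i / ε⌋)) ⊆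
      gridInterior ε (Set.Icc a b) := by
  intro x hx
  refine Set.mem_biUnion (x := fun i => ⌊x i / ε⌋) (fun y hy => ⟨fun i => ?_, fun i => ?_⟩)
    ((mem_gridCube_iff hε).2 rfl)
  · have ceil_le_floor : ⌈a i / ε⌉ ≤ ⌊x i / ε⌋ :=
      Int.le_floor.2 ((le_div_iff₀' hε).2 (hx i trivial).1)
    calc a i ≤ ε * ⌈a i / ε⌉ := le_mul_ceil_div hε _
      _ ≤ ε * ⌊x i / ε⌋ := by gcongr
      _ ≤ y i := (hy i trivial).1
  · have floor_add_one_le : ⌊x i / ε⌋ + 1 ≤ ⌊b i / ε⌋ :=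
      Int.floor_lt.2 ((div_lt_iff₀' hε).2 (hx i trivial).2)
    calc y i ≤ ε * (⌊x i / ε⌋ + 1) := (hy i trivial).2.le
      _ ≤ ε * ⌊b i / ε⌋ := by gcongr; exact_mod_cast floor_add_one_le
      _ ≤ b i := mul_floor_div_le hε _

theorem mul_volume_Icc_le_volume_gridInterior [Fintype ι] {k : ℝ} (hε : 0 < ε) (hk : 2 ≤ k)
    {a b : ι → ℝ} (hab : ∀ i, k * ε ≤ b i - a i) :
    ENNReal.ofReal (((k - 2) / k) ^ Fintype.card ι) * volume (Set.Icc a b) ≤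
      volume (gridInterior ε (Set.Icc a b)) := by
  have hk₀ : 0 < k := by linarith
  have hr : 0 ≤ (k - 2) / k := div_nonneg (by linarith) hk₀.le
  calc ENNReal.ofReal (((k - 2) / k) ^ Fintype.card ι) * volume (Set.Icc a b)
      = ∏ i, ENNReal.ofReal ((k - 2) / k * (b i - a i)) := by
        simp only [Real.volume_Icc_pi, ENNReal.ofReal_mul hr, Finset.prod_mul_distrib,
          Finset.prod_const, Finset.card_univ, ENNReal.ofReal_pow hr]
    _ ≤ ∏ i, ENNReal.ofReal (ε * ⌊b i / ε⌋ - ε * ⌈a i / ε⌉) := by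
        gcongr with i
        exact mul_sub_le_mul_floor_sub_mul_ceil hε hk₀ (hab i)
    _ = volume (Set.univ.pi fun i => Set.Ico (ε * ⌈a i / ε⌉) (ε * ⌊b i / ε⌋)) :=
        Real.volume_pi_Ico.symm
    _ ≤ volume (gridInterior ε (Set.Icc a b)) :=
        measure_mono (pi_Ico_subset_gridInterior_Icc hε a b)

theorem mul_volume_iUnion_Icc_le_volume_gridInterior [Fintype ι] [Countable κ] {k : ℝ}
    (hε : 0 < ε) (hk : 2 ≤ k) {a b : κ → ι → ℝ} (hab : ∀ j i, k * ε ≤ b j i - a j i)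
    (hdisj : Pairwise (Function.onFun (AEDisjoint volume) fun j => Set.Icc (a j) (b j))) :
    ENNReal.ofReal (((k - 2) / k) ^ Fintype.card ι) * volume (⋃ j, Set.Icc (a j) (b j)) ≤
      volume (gridInterior ε (⋃ j, Set.Icc (a j) (b j))) :=
  calc _ ≤ volume (⋃ j, gridInterior ε (Set.Icc (a j) (b j))) :=
        mul_measure_iUnion_le_of_subset (fun _ => gridInterior_subset _ _)
          (fun _ => (measurableSet_gridInterior _ _).nullMeasurableSet) hdisj
          fun j => mul_volume_Icc_le_volume_gridInterior hε hk (hab j)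
    _ ≤ volume (gridInterior ε (⋃ j, Set.Icc (a j) (b j))) :=
        measure_mono <| Set.iUnion_subset fun j =>
          gridInterior_mono ε (Set.subset_iUnion (fun j => Set.Icc (a j) (b j)) j)

theorem epsilon_grid_cubes_in_union_general [Fintype ι] [Finite κ] {k : ℝ}
    (hε : 0 < ε) (hk : 2 ≤ k) {a b : κ → ι → ℝ} (hab : ∀ j i, k * ε ≤ b j i - a j i)
    (hdisj : Pairwise (Function.onFun (AEDisjoint volume) fun j => Set.Icc (a j) (b j))) :
    ∃ C : Finset (ι → ℤ),
      (C : Set (ι → ℤ)).PairwiseDisjoint (gridCube ε) ∧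
      (∀ c ∈ C, gridCube ε c ⊆ ⋃ j, Set.Icc (a j) (b j)) ∧
      ENNReal.ofReal (((k - 2) / k) ^ Fintype.card ι) * volume (⋃ j, Set.Icc (a j) (b j)) ≤
        volume (⋃ c ∈ C, gridCube ε c) := by
  have hfin : {c | gridCube ε c ⊆ ⋃ j, Set.Icc (a j) (b j)}.Finite :=
    finite_setOf_gridCube_subset hε <|
      Bornology.isBounded_iUnion.2 fun j => Metric.isBounded_Icc (a j) (b j)
  refine ⟨hfin.toFinset, (pairwise_disjoint_gridCube hε).set_pairwise _,
    fun _ => hfin.mem_toFinset.1, ?_⟩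
  simpa only [gridInterior, hfin.mem_toFinset] using
    mul_volume_iUnion_Icc_le_volume_gridInterior hε hk hab hdisj

end Grid

/-- A pairwise disjoint family of γ-bounded rectilinear hyperrectangles (γ > k·ε) with
union S contains a finite pairwise disjoint family of half-open ε-grid cubes whose total
volume is at least ((k-2)/k)^d times the volume of S. -/
theorem epsilon_grid_cubes_in_union
    (ε : ℝ) (hε : 0 < ε) (k : ℕ) (hk : 3 ≤ k) (d : ℕ) (hd : 1 ≤ d)
    (γ : ℝ) (hγ : γ > (k : ℝ) * ε) (m : ℕ)
    (a b : Fin m → Fin d → ℝ)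
    (hab : ∀ j i, a j i ≤ b j i) (hbound : ∀ j i, γ ≤ b j i - a j i)
    (hdisj : Pairwise (Function.onFun Disjoint
      fun j => Set.univ.pi fun i => Set.Icc (a j i) (b j i)))
    (S : Set (Fin d → ℝ))
    (hS : S = ⋃ j, Set.univ.pi fun i => Set.Icc (a j i) (b j i)) :
    ∃ C : Finset (Fin d → ℤ),
      ((C : Set (Fin d → ℤ)).PairwiseDisjoint
        fun c => Set.univ.pi fun i => Set.Ico (ε * c i) (ε * ((c i : ℝ) + 1))) ∧
      (∀ c ∈ C, (Set.univ.pi fun i => Set.Ico (ε * c i) (ε * ((c i : ℝ) + 1))) ⊆ S) ∧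
      ENNReal.ofReal ((((k : ℝ) - 2) / k) ^ d) * volume S ≤
        volume (⋃ c ∈ C, Set.univ.pi fun i => Set.Ico (ε * c i) (ε * ((c i : ℝ) + 1))) := by
  simp only [Set.pi_univ_Icc] at hdisj hS
  have cubes_exist := epsilon_grid_cubes_in_union_general hε (mod_cast (by lia : 2 ≤ k))
    (fun j i => hγ.le.trans (hbound j i)) fun _ _ hne => (hdisj hne).aedisjoint
  rwa [Fintype.card_fin, ← hS] at cubes_exist
end
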